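/- (Form of the optimal critic, Eq. 3 of the paper.) Let P and Q be probability measures on a measurable space X with P absolutely continuous with respect to Q and with finite Kullback–Leibler divergence. If a bounded measurable function T : X → ℝ achieves equality in the Donsker–Varadhan bound, i.e., ∫ T dP − log (∫ e^T dQ) = D_KL(P‖Q), then e^{T(x)} = (∫ e^T dQ) · (dP/dQ)(x) for Q-almost every x; equivalently, T(x) = log (dP/dQ)(x) + log (∫ e^T dQ) for Q-almost every x in the set where dP/dQ > 0. -/

import Mathlib

open MeasureTheory

/-- The Kullback–Leibler divergence `∫ log (dP/dQ) dP`. -/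
noncomputable def klDiv {X : Type*} [MeasurableSpace X]
    (P Q : Measure X) : ℝ :=
  ∫ x, Real.log ((P.rnDeriv Q x).toReal) ∂P

/-!
Let `Z = ∫ e^T dQ` and let `Q_T` be the exponential tilt of `Q`, the probability measure with
density `e^T / Z` with respect to `Q`. The gap in the Donsker–Varadhan bound is itself a divergence:
`D(P‖Q) - (∫ T dP - log Z) = D(P‖Q_T)`. Equality therefore forces `D(P‖Q_T) = 0`, that is
`P = Q_T`, and then `dP/dQ = e^T / Z`.
-/

section DonskerVaradhan

variable {X : Type*} [MeasurableSpace X] {P Q : Measure X} {T : X → ℝ}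

theorem klDiv_eq_zero_iff_of_measure_univ_eq [IsFiniteMeasure P] [IsFiniteMeasure Q]
    (hPQ : P ≪ Q) (hKL : Integrable (llr P Q) P) (hmass : P Set.univ = Q Set.univ) :
    klDiv P Q = 0 ↔ P = Q := by
  have klDiv_eq_toReal : klDiv P Q = (InformationTheory.klDiv P Q).toReal :=
    (InformationTheory.toReal_klDiv_of_measure_eq hPQ hmass).symm
  rw [klDiv_eq_toReal, ENNReal.toReal_eq_zero_iff,
    or_iff_left (InformationTheory.klDiv_ne_top hPQ hKL), InformationTheory.klDiv_eq_zero_iff]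

theorem klDiv_tilted_right [IsProbabilityMeasure P] [SigmaFinite Q] (hPQ : P ≪ Q)
    (hKL : Integrable (llr P Q) P) (hTP : Integrable T P)
    (hTQ : Integrable (fun x => Real.exp (T x)) Q) :
    klDiv P (Q.tilted T) =
      klDiv P Q - (∫ x, T x ∂P - Real.log (∫ x, Real.exp (T x) ∂Q)) :=
  (integral_llr_tilted_right hPQ hTP hTQ hKL).trans (sub_add _ _ _)

theorem donskerVaradhan_eq_klDiv_iff_eq_tilted [IsProbabilityMeasure P] [SigmaFinite Q]
    (hPQ : P ≪ Q) (hKL : Integrable (llr P Q) P) (hTP : Integrable T P)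
    (hTQ : Integrable (fun x => Real.exp (T x)) Q) :
    ∫ x, T x ∂P - Real.log (∫ x, Real.exp (T x) ∂Q) = klDiv P Q ↔ P = Q.tilted T := by
  have : NeZero Q := ⟨fun hQ => IsProbabilityMeasure.ne_zero P <|
    Measure.absolutelyContinuous_zero_iff.1 (hQ ▸ hPQ)⟩
  have : IsProbabilityMeasure (Q.tilted T) := isProbabilityMeasure_tilted hTQ
  have hac : P ≪ Q.tilted T := hPQ.trans (absolutelyContinuous_tilted hTQ)
  have hKL_tilted : Integrable (llr P (Q.tilted T)) P :=
    integrable_llr_tilted_right hPQ hTP hKL hTQ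
  rw [← klDiv_eq_zero_iff_of_measure_univ_eq hac hKL_tilted (by simp only [measure_univ]),
    klDiv_tilted_right hPQ hKL hTP hTQ, sub_eq_zero, eq_comm]

theorem exp_ae_eq_integral_exp_mul_rnDeriv_tilted [SigmaFinite Q]
    (hTQ : Integrable (fun x => Real.exp (T x)) Q) :
    ∀ᵐ x ∂Q, Real.exp (T x) =
      (∫ y, Real.exp (T y) ∂Q) * ((Q.tilted T).rnDeriv Q x).toReal := by
  rcases eq_zero_or_neZero Q with rfl | _
  · simp
  have hZ : 0 < ∫ y, Real.exp (T y) ∂Q := integral_exp_pos hTQ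
  have hT : AEMeasurable T Q :=
    Real.aemeasurable_of_aemeasurable_exp hTQ.aemeasurable
  filter_upwards [rnDeriv_tilted_left_self hT] with x hx
  rw [hx, ENNReal.toReal_ofReal (by positivity), mul_div_cancel₀ _ hZ.ne']

theorem optimal_critic_form_general [IsProbabilityMeasure P] [SigmaFinite Q]
    (hPQ : P ≪ Q) (hKL : Integrable (llr P Q) P) (hTP : Integrable T P)
    (hTQ : Integrable (fun x => Real.exp (T x)) Q)
    (heq : ∫ x, T x ∂P - Real.log (∫ x, Real.exp (T x) ∂Q) = klDiv P Q) :
    (∀ᵐ x ∂Q,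
        Real.exp (T x) = (∫ y, Real.exp (T y) ∂Q) * (P.rnDeriv Q x).toReal) ∧
    (∀ᵐ x ∂Q, T x = Real.log ((P.rnDeriv Q x).toReal)
            + Real.log (∫ y, Real.exp (T y) ∂Q)) := by
  obtain rfl : P = Q.tilted T :=
    (donskerVaradhan_eq_klDiv_iff_eq_tilted hPQ hKL hTP hTQ).1 heq
  refine ⟨exp_ae_eq_integral_exp_mul_rnDeriv_tilted hTQ, ?_⟩
  filter_upwards [log_rnDeriv_tilted_left_self hTQ] with x hx
  rw [hx, sub_add_cancel]

end DonskerVaradhan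

/-- Form of the optimal critic: if a bounded measurable `T` achieves equality in the
Donsker–Varadhan bound, then `e^T = (∫ e^T dQ) · (dP/dQ)` Q-a.e.; equivalently,
`T = log (dP/dQ) + log (∫ e^T dQ)` Q-a.e. on the set where `dP/dQ > 0`. -/
theorem optimal_critic_form
    {X : Type*} [MeasurableSpace X] (P Q : Measure X)
    [IsProbabilityMeasure P] [IsProbabilityMeasure Q]
    (hPQ : P ≪ Q)
    (hKL : Integrable (fun x => Real.log ((P.rnDeriv Q x).toReal)) P)
    (T : X → ℝ) (hT : Measurable T) (C : ℝ) (hC : ∀ x, |T x| ≤ C)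
    (heq : ∫ x, T x ∂P - Real.log (∫ x, Real.exp (T x) ∂Q) = klDiv P Q) :
    (∀ᵐ x ∂Q,
        Real.exp (T x) = (∫ y, Real.exp (T y) ∂Q) * (P.rnDeriv Q x).toReal) ∧
    (∀ᵐ x ∂Q, 0 < (P.rnDeriv Q x).toReal →
        T x = Real.log ((P.rnDeriv Q x).toReal)
            + Real.log (∫ y, Real.exp (T y) ∂Q)) := by
  have hTP : Integrable T P := .of_bound hT.aestronglyMeasurable C (ae_of_all P hC)
  have hTQ : Integrable (fun x => Real.exp (T x)) Q := by
    simpa only [one_mul] using ProbabilityTheory.integrable_exp_mul_of_le 1 C zero_le_one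
      hT.aemeasurable (ae_of_all Q fun x => le_of_abs_le (hC x))
  exact (optimal_critic_form_general hPQ hKL hTP hTQ heq).imp_right
    fun hlog => hlog.mono fun _ hx _ => hx
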